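/- arXiv:1901.10911 — 2 statements merged into one kernel-verified Lean document; each statement's English description precedes it below -/
import Mathlib

section
/- Let G28 be the graph on vertex set {0,1,…,43} with adjacency list {0: 1 2 3; 1: 0 40 41; 2: 0 39 43; 3: 0 38 42; 4: 9 13 17; 5: 8 12 17; 6: 7 15 19; 7: 6 16 18; 8: 5 9 14; 9: 4 8 11; 10: 13 16 22; 11: 9 12 20; 12: 5 11 26; 13: 4 10 25; 14: 8 15 21; 15: 6 14 23; 16: 7 10 24; 17: 4 5 20; 18: 7 22 28; 19: 6 21 27; 20: 11 17 32; 21: 14 19 37; 22: 10 18 36; 23: 15 27 37; 24: 16 28 36; 25: 13 30 35; 26: 12 29 34; 27: 19 23 32; 28: 18 24 33; 29: 26 31 35; 30: 25 31 34; 31: 29 30 33; 32: 20 27 40; 33: 28 31 41; 34: 26 30 39; 35: 25 29 39; 36: 22 24 38; 37: 21 23 38; 38: 3 36 37; 39: 2 34 35; 40: 1 32 43; 41: 1 33 42; 42: 3 41 43; 43: 2 40 42}. Then G28 is a cubic graph that admits no proper 3-edge-colouring, its resistance satisfies ρ(G28) ≥ 3 (removing any two vertices leaves a graph with no proper 3-edge-colouring),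 and its oddness satisfies ω(G28) ≥ 4. -/
/-! Basic definitions about cubic graphs, edge colourings, oddness, resistance,
and cyclic connectivity. -/

/-- A proper 3-edge-colouring of a simple graph: a colour for every unordered pair,
such that distinct edges of the graph sharing a vertex receive distinct colours. -/
def IsProper3EdgeColoring {V : Type*} (G : SimpleGraph V) (c : Sym2 V → Fin 3) : Prop :=
  ∀ e₁ e₂ : Sym2 V, e₁ ∈ G.edgeSet → e₂ ∈ G.edgeSet → e₁ ≠ e₂ →
    (∃ v, v ∈ e₁ ∧ v ∈ e₂) → c e₁ ≠ c e₂

/-- A graph admits a proper 3-edge-colouring. -/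
def ThreeEdgeColorable {V : Type*} (G : SimpleGraph V) : Prop :=
  ∃ c : Sym2 V → Fin 3, IsProper3EdgeColoring G c

/-- A cubic graph: every vertex has exactly 3 neighbours. -/
def IsCubic {V : Type*} (G : SimpleGraph V) : Prop :=
  ∀ v : V, Nat.card (G.neighborSet v) = 3

/-- A 2-connected graph: connected and with no cutvertex. -/
def TwoConnected {V : Type*} (G : SimpleGraph V) : Prop :=
  G.Connected ∧ ∀ v : V, (G.induce ({v}ᶜ : Set V)).Connected

/-- A snark: a 2-connected cubic graph admitting no proper 3-edge-colouring. -/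
def IsSnark {V : Type*} (G : SimpleGraph V) : Prop :=
  IsCubic G ∧ TwoConnected G ∧ ¬ ThreeEdgeColorable G

/-- A 2-factor of `G`: a spanning subgraph in which every vertex has degree 2. -/
def IsTwoFactor {V : Type*} (G H : SimpleGraph V) : Prop :=
  H ≤ G ∧ ∀ v : V, Nat.card (H.neighborSet v) = 2

/-- An even factor of `G`: a spanning subgraph in which every vertex has even degree. -/
def IsEvenFactor {V : Type*} (G H : SimpleGraph V) : Prop :=
  H ≤ G ∧ ∀ v : V, Even (Nat.card (H.neighborSet v))

/-- The number of connected components of odd order of a graph. -/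
noncomputable def oddComponentCount {V : Type*} (H : SimpleGraph V) : ℕ :=
  Nat.card {C : H.ConnectedComponent // Odd (Nat.card C.supp)}

/-- The oddness of a graph: the smallest number of odd components
(odd circuits) in a 2-factor. -/
noncomputable def oddness {V : Type*} (G : SimpleGraph V) : ℕ :=
  sInf {n | ∃ H : SimpleGraph V, IsTwoFactor G H ∧ oddComponentCount H = n}

/-- The weak oddness of a graph: the smallest number of odd components in an even factor. -/
noncomputable def weakOddness {V : Type*} (G : SimpleGraph V) : ℕ :=
  sInf {n | ∃ H : SimpleGraph V, IsEvenFactor G H ∧ oddComponentCount H = n}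

/-- The resistance of a graph: the smallest number of vertices whose removal
yields a graph admitting a proper 3-edge-colouring. -/
noncomputable def resistance {V : Type*} (G : SimpleGraph V) : ℕ :=
  sInf {n | ∃ S : Set V, S.ncard = n ∧ ThreeEdgeColorable (G.induce Sᶜ)}

/-- There is a cycle through the vertex `v`. -/
def HasCycleAt {V : Type*} (G : SimpleGraph V) (v : V) : Prop :=
  ∃ p : G.Walk v v, p.IsCycle

/-- A set of edges is cycle-separating if after deleting it at least two components
contain cycles. -/
def CycleSeparating {V : Type*} (G : SimpleGraph V) (s : Set (Sym2 V)) : Prop :=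
  s ⊆ G.edgeSet ∧ ∃ u v : V, HasCycleAt (G.deleteEdges s) u ∧ HasCycleAt (G.deleteEdges s) v ∧
    ¬ (G.deleteEdges s).Reachable u v

/-- `G` is cyclically `k`-edge-connected: no set of fewer than `k` edges is cycle-separating. -/
def CyclicallyEdgeConnected {V : Type*} (G : SimpleGraph V) (k : ℕ) : Prop :=
  ∀ s : Finset (Sym2 V), s.card < k → ¬ CycleSeparating G (↑s : Set (Sym2 V))

/-- The cycle rank `β(G) = |E(G)| - |V(G)| + 1` of a graph. -/
noncomputable def cycleRank {V : Type*} (G : SimpleGraph V) : ℕ :=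
  Nat.card G.edgeSet + 1 - Nat.card V

/-- The cyclic connectivity of `G`: the largest `k ≤ β(G)` such that `G` is
cyclically `k`-edge-connected. -/
noncomputable def cyclicConnectivity {V : Type*} (G : SimpleGraph V) : ℕ :=
  sSup {k | k ≤ cycleRank G ∧ CyclicallyEdgeConnected G k}

/-- The circumference of a graph: the maximum length of a cycle. -/
noncomputable def circumference {V : Type*} (G : SimpleGraph V) : ℕ :=
  sSup {n | ∃ (v : V) (p : G.Walk v v), p.IsCycle ∧ p.length = n}

/-- The edges of graph number 28 (Class 5a) of the 31 snarks of order 44,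
cyclic connectivity 4 and oddness 4, as a list of pairs. -/
def g28EdgeList : List (Fin 44 × Fin 44) :=
  [(0,1),(0,2),(0,3),(1,40),(1,41),(2,39),(2,43),(3,38),(3,42),
   (4,9),(4,13),(4,17),(5,8),(5,12),(5,17),(6,7),(6,15),(6,19),
   (7,16),(7,18),(8,9),(8,14),(9,11),(10,13),(10,16),(10,22),
   (11,12),(11,20),(12,26),(13,25),(14,15),(14,21),(15,23),(16,24),
   (17,20),(18,22),(18,28),(19,21),(19,27),(20,32),(21,37),(22,36),
   (23,27),(23,37),(24,28),(24,36),(25,30),(25,35),(26,29),(26,34),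
   (27,32),(28,33),(29,31),(29,35),(30,31),(30,34),(31,33),(32,40),
   (33,41),(34,39),(35,39),(36,38),(37,38),(40,43),(41,42),(42,43)]

/-- Graph number 28 of the 31 snarks in `𝓜`. -/
def g28 : SimpleGraph (Fin 44) :=
  SimpleGraph.fromRel (fun a b => (a, b) ∈ g28EdgeList)


/-! ### A verified dynamic program over edge cuts -/

namespace G28Aux

/-- Force evaluation of a natural number before continuing. -/
def force {α : Type} (n : ℕ) (f : ℕ → α) : α :=
  match n with
  | 0 => f 0
  | m + 1 => f (m + 1)

lemma force_eq {α : Type} (n : ℕ) (f : ℕ → α) : force n f = f n := by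
  cases n <;> rfl

/-- Number of slots. -/
def width : ℕ := 9

/-- Code of a slot assignment. -/
def enc : ℕ → (ℕ → ℕ) → ℕ
  | 0, _ => 0
  | k + 1, s => enc k s + s k * 3 ^ k

/-- Bit set of all codes whose `j`-th digit lies in `A j`. -/
def pm : ℕ → (ℕ → List ℕ) → ℕ
  | 0, _ => 1
  | k + 1, A => force (pm k A) fun R => (A k).foldr (fun d acc => acc ||| (R <<< (d * 3 ^ k))) 0

lemma testBit_fold (R k n : ℕ) (h : R.testBit n = true) (l : List ℕ) (d : ℕ) (hd : d ∈ l) :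
    (l.foldr (fun d acc => acc ||| (R <<< (d * 3 ^ k))) 0).testBit (n + d * 3 ^ k) = true := by
  induction l with
  | nil => simp at hd
  | cons x t ih =>
    simp only [List.foldr_cons, Nat.testBit_or, Bool.or_eq_true]
    rcases List.mem_cons.1 hd with rfl | hd
    · right
      simp [Nat.testBit_shiftLeft, h]
    · exact Or.inl (ih hd)

lemma testBit_pm (k : ℕ) (A : ℕ → List ℕ) (s : ℕ → ℕ) (h : ∀ j < k, s j ∈ A j) :
    (pm k A).testBit (enc k s) = true := by
  induction k with
  | zero => simp [pm, enc]
  | succ k ih =>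
    simp only [pm, force_eq, enc]
    exact testBit_fold _ _ _ (ih fun j hj => h j (by omega)) _ _ (h k (by omega))

/-- Update of a function. -/
def upd {α : Type} (s : ℕ → α) (p : ℕ) (x : α) : ℕ → α := fun q => bif Nat.beq q p then x else s q

lemma upd_same {α : Type} (s : ℕ → α) (p : ℕ) (x : α) : upd s p x p = x := by
  simp [upd]

lemma upd_ne {α : Type} (s : ℕ → α) (p q : ℕ) (x : α) (h : q ≠ p) : upd s p x q = s q := by
  have : Nat.beq q p = false := by
    cases hb : Nat.beq q p with
    | false => rfl
    | true => exact absurd (Nat.eq_of_beq_eq_true hb) h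
  simp [upd, this]

lemma enc_congr (k : ℕ) (s t : ℕ → ℕ) (h : ∀ j < k, s j = t j) : enc k s = enc k t := by
  induction k with
  | zero => rfl
  | succ k ih =>
    simp only [enc]
    rw [ih fun j hj => h j (by omega), h k (by omega)]

lemma enc_upd (k : ℕ) (s : ℕ → ℕ) (p x : ℕ) (hp : p < k) :
    enc k (upd s p x) + s p * 3 ^ p = enc k s + x * 3 ^ p := by
  induction k with
  | zero => omega
  | succ k ih =>
    simp only [enc]
    rcases Nat.lt_succ_iff_lt_or_eq.1 hp with h | rfl
    · rw [upd_ne _ _ _ _ (by omega)]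
      have := ih h
      omega
    · rw [upd_same, enc_congr p (upd s p x) s fun j hj => upd_ne _ _ _ _ (by omega)]
      omega

/-- Operations of the dynamic program. -/
inductive Op where
  | ins (p a b : ℕ)
  | del (p a b : ℕ)
  | chk (v a p b q d r : ℕ)

def free : List ℕ := [0, 1, 2]

def maskOne (p d : ℕ) : ℕ := pm width (upd (fun _ => free) p [d])

def maskThree (p q r x y z : ℕ) : ℕ :=
  pm width (upd (upd (upd (fun _ => free) p [x]) q [y]) r [z])

def maskChk (p q r : ℕ) : ℕ :=
  maskThree p q r 0 1 2 ||| maskThree p q r 0 2 1 ||| maskThree p q r 1 0 2 |||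
    maskThree p q r 1 2 0 ||| maskThree p q r 2 0 1 ||| maskThree p q r 2 1 0

def insT (p S : ℕ) : ℕ := S ||| (S <<< (3 ^ p)) ||| (S <<< (2 * 3 ^ p))

def delT (p m0 m1 m2 S : ℕ) : ℕ :=
  (S &&& m0) ||| ((S &&& m1) >>> (3 ^ p)) ||| ((S &&& m2) >>> (2 * 3 ^ p))

/-- The bit-parallel dynamic program: the three tables hold the codes reachable with at most
0, 1, 2 bad vertices. -/
def run : List Op → ℕ → ℕ → ℕ → ℕ
  | [], _, _, s2 => s2
  | .ins p _ _ :: t, s0, s1, s2 =>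
    force (insT p s0) fun a => force (insT p s1) fun b => force (insT p s2) fun c => run t a b c
  | .del p _ _ :: t, s0, s1, s2 =>
    force (maskOne p 0) fun m0 => force (maskOne p 1) fun m1 => force (maskOne p 2) fun m2 =>
    force (delT p m0 m1 m2 s0) fun a => force (delT p m0 m1 m2 s1) fun b =>
    force (delT p m0 m1 m2 s2) fun c => run t a b c
  | .chk _ _ p _ q _ r :: t, s0, s1, s2 =>
    force (maskChk p q r) fun m =>
    force (s0 &&& m) fun a => force ((s1 &&& m) ||| s0) fun b =>
    force ((s2 &&& m) ||| s1) fun c => run t a b c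

/-- The content of a slot is the given edge. -/
def holds (o : Option (ℕ × ℕ)) (a b : ℕ) : Bool :=
  match o with
  | none => false
  | some (x, y) => (Nat.beq x a && Nat.beq y b) || (Nat.beq x b && Nat.beq y a)

def neB (p q : ℕ) : Bool := !(Nat.beq p q)

/-- The program handles its slots consistently. -/
def wf : List Op → (ℕ → Option (ℕ × ℕ)) → Bool
  | [], _ => true
  | .ins p a b :: t, L =>
    Nat.blt p width && (L p).isNone && wf t (upd L p (some (a, b)))
  | .del p a b :: t, L =>
    Nat.blt p width && holds (L p) a b && wf t (upd L p none)
  | .chk v a p b q d r :: t, L =>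
    holds (L p) v a && (holds (L q) v b && (holds (L r) v d &&
      (neB p q && (neB p r && (neB q r && wf t L)))))

/-- Colour stored in a slot. -/
def val (C : ℕ → ℕ → ℕ) (o : Option (ℕ × ℕ)) : ℕ :=
  match o with
  | none => 0
  | some (x, y) => C x y

lemma val_holds (C : ℕ → ℕ → ℕ) (hs : ∀ a b, C a b = C b a) (o : Option (ℕ × ℕ)) (a b : ℕ)
    (h : holds o a b = true) : val C o = C a b := by
  rcases o with _ | ⟨x, y⟩
  · simp [holds] at h
  · simp only [holds, Bool.or_eq_true, Bool.and_eq_true] at h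
    rcases h with ⟨h1, h2⟩ | ⟨h1, h2⟩
    · rw [Nat.eq_of_beq_eq_true h1, Nat.eq_of_beq_eq_true h2]; rfl
    · rw [Nat.eq_of_beq_eq_true h1, Nat.eq_of_beq_eq_true h2]; exact hs _ _

/-- The code of the colouring on the current slots. -/
def code (C : ℕ → ℕ → ℕ) (L : ℕ → Option (ℕ × ℕ)) : ℕ := enc width fun p => val C (L p)

lemma code_upd (C : ℕ → ℕ → ℕ) (L : ℕ → Option (ℕ × ℕ)) (p : ℕ) (o : Option (ℕ × ℕ))
    (hp : p < width) :
    code C (upd L p o) + val C (L p) * 3 ^ p = code C L + val C o * 3 ^ p := by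
  have h := enc_upd width (fun p => val C (L p)) p (val C o) hp
  rw [← code] at h
  rw [← h, code]
  congr 2
  funext q
  by_cases hq : q = p
  · subst hq; simp [upd_same]
  · simp [upd_ne _ _ _ _ hq]

lemma mem_free {x : ℕ} (h : x < 3) : x ∈ free := by
  simp only [free, List.mem_cons, List.not_mem_nil, or_false]; omega

lemma val_lt (C : ℕ → ℕ → ℕ) (hl : ∀ a b, C a b < 3) (o : Option (ℕ × ℕ)) : val C o < 3 := by
  rcases o with _ | ⟨x, y⟩
  · simp [val]
  · exact hl x y

lemma insT_spec (p S n x : ℕ) (hx : x < 3) (h : S.testBit n = true) :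
    (insT p S).testBit (n + x * 3 ^ p) = true := by
  have h3 : x = 0 ∨ x = 1 ∨ x = 2 := by omega
  rcases h3 with rfl | rfl | rfl <;>
    simp [insT, Nat.testBit_or, Nat.testBit_shiftLeft, h]

lemma delT_spec (p m0 m1 m2 S n x : ℕ) (hx : x < 3) (h : S.testBit (n + x * 3 ^ p) = true)
    (h0 : x = 0 → m0.testBit (n + x * 3 ^ p) = true)
    (h1 : x = 1 → m1.testBit (n + x * 3 ^ p) = true)
    (h2 : x = 2 → m2.testBit (n + x * 3 ^ p) = true) :
    (delT p m0 m1 m2 S).testBit n = true := by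
  have h3 : x = 0 ∨ x = 1 ∨ x = 2 := by omega
  simp only [delT, Nat.testBit_or, Nat.testBit_shiftRight, Nat.testBit_and, Bool.or_eq_true,
    Bool.and_eq_true]
  rcases h3 with rfl | rfl | rfl
  · left; left; have := h0 rfl; rw [zero_mul, add_zero] at h this; exact ⟨h, this⟩
  · left; right; have := h1 rfl; rw [one_mul, add_comm] at h this; exact ⟨h, this⟩
  · right; have := h2 rfl; rw [add_comm] at h this; exact ⟨h, this⟩

lemma maskOne_spec (C : ℕ → ℕ → ℕ) (hl : ∀ a b, C a b < 3) (L : ℕ → Option (ℕ × ℕ)) (p d : ℕ)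
    (h : val C (L p) = d) : (maskOne p d).testBit (code C L) = true := by
  refine testBit_pm _ _ _ fun j _ => ?_
  by_cases hj : j = p
  · subst hj; simp [upd_same, h]
  · rw [upd_ne _ _ _ _ hj]; exact mem_free (val_lt C hl _)

lemma maskThree_spec (C : ℕ → ℕ → ℕ) (hl : ∀ a b, C a b < 3) (L : ℕ → Option (ℕ × ℕ))
    (p q r x y z : ℕ) (hp : val C (L p) = x) (hq : val C (L q) = y) (hr : val C (L r) = z) :
    (maskThree p q r x y z).testBit (code C L) = true := by
  refine testBit_pm _ _ _ fun j _ => ?_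
  by_cases hj : j = r
  · subst hj; simp [upd_same, hr]
  rw [upd_ne _ _ _ _ hj]
  by_cases hj : j = q
  · subst hj; simp [upd_same, hq]
  rw [upd_ne _ _ _ _ hj]
  by_cases hj : j = p
  · subst hj; simp [upd_same, hp]
  · rw [upd_ne _ _ _ _ hj]; exact mem_free (val_lt C hl _)

lemma maskChk_spec (C : ℕ → ℕ → ℕ) (hl : ∀ a b, C a b < 3) (L : ℕ → Option (ℕ × ℕ))
    (p q r : ℕ) (h1 : val C (L p) ≠ val C (L q)) (h2 : val C (L p) ≠ val C (L r))
    (h3 : val C (L q) ≠ val C (L r)) :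
    (maskChk p q r).testBit (code C L) = true := by
  have hp := val_lt C hl (L p)
  have hq := val_lt C hl (L q)
  have hr := val_lt C hl (L r)
  have key := fun x y z => maskThree_spec C hl L p q r x y z
  simp only [maskChk, Nat.testBit_or, Bool.or_eq_true]
  generalize val C (L p) = x at *
  generalize val C (L q) = y at *
  generalize val C (L r) = z at *
  have k := key x y z rfl rfl rfl
  interval_cases x <;> interval_cases y <;> interval_cases z <;> simp_all

/-- Cost of an operation: one for checking a bad vertex. -/
def cost (bad : ℕ → Bool) : Op → ℕ
  | .chk v _ _ _ _ _ _ => bif bad v then 1 else 0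
  | _ => 0

/-- The colouring is proper at every good vertex that is checked. -/
def good (C : ℕ → ℕ → ℕ) (bad : ℕ → Bool) : Op → Prop
  | .chk v a _ b _ d _ => bad v = false → C v a ≠ C v b ∧ C v a ≠ C v d ∧ C v b ≠ C v d
  | _ => True

lemma run_spec (C : ℕ → ℕ → ℕ) (hl : ∀ a b, C a b < 3) (hs : ∀ a b, C a b = C b a)
    (bad : ℕ → Bool) (l : List Op) :
    ∀ (L : ℕ → Option (ℕ × ℕ)) (s0 s1 s2 n : ℕ), wf l L = true → (∀ o ∈ l, good C bad o) →
      n + (l.map (cost bad)).sum ≤ 2 →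
      (n ≤ 0 → s0.testBit (code C L) = true) → (n ≤ 1 → s1.testBit (code C L) = true) →
      (n ≤ 2 → s2.testBit (code C L) = true) → run l s0 s1 s2 ≠ 0 := by
  induction l with
  | nil =>
    intro L s0 s1 s2 n _ _ hn _ _ h2 h
    simp only [run] at h
    have := h2 (by simpa using hn)
    simp [h] at this
  | cons o t ih =>
    intro L s0 s1 s2 n hw hg hn h0 h1 h2
    have hgt : ∀ o ∈ t, good C bad o := fun o ho => hg o (List.mem_cons_of_mem _ ho)
    have hgo := hg o List.mem_cons_self
    rw [List.map_cons, List.sum_cons] at hn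
    cases o with
    | ins p a b =>
      simp only [wf, Bool.and_eq_true] at hw
      obtain ⟨⟨hp, hL⟩, hw⟩ := hw
      have hp : p < width := by simpa [Nat.blt_eq] using hp
      have hc := code_upd C L p (some (a, b)) hp
      rw [Option.isNone_iff_eq_none.1 hL] at hc
      simp only [val, zero_mul, add_zero] at hc
      simp only [run, force_eq]
      refine ih _ _ _ _ n hw hgt (by simpa [cost] using hn) ?_ ?_ ?_ <;> intro h <;> rw [hc] <;>
        apply insT_spec _ _ _ _ (hl a b)
      exacts [h0 h, h1 h, h2 h]
    | del p a b =>
      simp only [wf, Bool.and_eq_true] at hw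
      obtain ⟨⟨hp, hL⟩, hw⟩ := hw
      have hp : p < width := by simpa [Nat.blt_eq] using hp
      have hc := code_upd C L p none hp
      have hv : val C none = 0 := rfl
      rw [hv, zero_mul, add_zero] at hc
      have hm := fun d => maskOne_spec C hl L p d
      rw [← hc] at hm h0 h1 h2
      simp only [run, force_eq]
      refine ih _ _ _ _ n hw hgt (by simpa [cost] using hn) ?_ ?_ ?_ <;> intro h <;>
        refine delT_spec _ _ _ _ _ _ _ (val_lt C hl (L p)) ?_ (hm 0) (hm 1) (hm 2)
      exacts [h0 h, h1 h, h2 h]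
    | chk v a p b q d r =>
      simp only [wf, Bool.and_eq_true] at hw
      obtain ⟨ha, hb, hd, -, -, -, hw⟩ := hw
      simp only [run, force_eq]
      cases hbad : bad v with
      | true =>
        refine ih L _ _ _ (n + 1) hw hgt (by simp [cost, hbad] at hn; omega) ?_ ?_ ?_ <;> intro h
        · omega
        · rw [Nat.testBit_or, h0 (by omega), Bool.or_true]
        · rw [Nat.testBit_or, h1 (by omega), Bool.or_true]
      | false =>
        obtain ⟨e1, e2, e3⟩ := hgo hbad
        rw [← val_holds C hs _ _ _ ha, ← val_holds C hs _ _ _ hb] at e1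
        rw [← val_holds C hs _ _ _ ha, ← val_holds C hs _ _ _ hd] at e2
        rw [← val_holds C hs _ _ _ hb, ← val_holds C hs _ _ _ hd] at e3
        have hm := maskChk_spec C hl L p q r e1 e2 e3
        refine ih L _ _ _ n hw hgt (by simpa [cost, hbad] using hn) ?_ ?_ ?_ <;> intro h
        · rw [Nat.testBit_and, h0 h, hm]; rfl
        · rw [Nat.testBit_or, Nat.testBit_and, h1 h, hm]; rfl
        · rw [Nat.testBit_or, Nat.testBit_and, h2 h, hm]; rfl

/-- The program for `g28`. -/
def prog : List Op :=
  [.ins 0 7 16, .ins 1 10 16, .ins 2 16 24, .chk 16 7 0 10 1 24 2, .ins 3 6 7, .ins 4 7 18,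
   .chk 7 6 3 16 0 18 4, .del 0 7 16, .ins 0 10 13, .ins 5 10 22, .chk 10 13 0 16 1 22 5,
   .del 1 10 16, .ins 1 18 22, .ins 6 22 36, .chk 22 10 5 18 1 36 6, .del 5 10 22,
   .ins 5 18 28, .chk 18 7 4 22 1 28 5, .del 4 7 18, .del 1 18 22, .ins 1 6 15, .ins 4 6 19,
   .chk 6 7 3 15 1 19 4, .del 3 6 7, .ins 3 24 36, .ins 7 36 38, .chk 36 22 6 24 3 38 7,
   .del 6 22 36, .ins 6 24 28, .chk 24 16 2 28 6 36 3, .del 2 16 24, .del 3 24 36,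
   .ins 2 28 33, .chk 28 18 5 24 6 33 2, .del 5 18 28, .del 6 24 28, .ins 3 14 15,
   .ins 5 15 23, .chk 15 6 1 14 3 23 5, .del 1 6 15, .ins 1 8 14, .ins 6 14 21,
   .chk 14 8 1 15 3 21 6, .del 3 14 15, .ins 3 19 21, .ins 8 21 37, .chk 21 14 6 19 3 37 8,
   .del 6 14 21, .ins 6 19 27, .chk 19 6 4 21 3 27 6, .del 4 6 19, .del 3 19 21, .ins 3 23 27,
   .ins 4 27 32, .chk 27 19 6 23 3 32 4, .del 6 19 27, .ins 6 23 37, .chk 23 15 5 27 3 37 6,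
   .del 5 15 23, .del 3 23 27, .ins 3 31 33, .ins 5 33 41, .chk 33 28 2 31 3 41 5,
   .del 2 28 33, .ins 2 37 38, .chk 37 21 8 23 6 38 2, .del 8 21 37, .del 6 23 37, .ins 6 3 38,
   .chk 38 3 6 36 7 37 2, .del 7 36 38, .del 2 37 38, .ins 2 1 41, .ins 7 41 42,
   .chk 41 1 2 33 5 42 7, .del 5 33 41, .ins 5 3 42, .ins 8 42 43, .chk 42 3 5 41 7 43 8,
   .del 7 41 42, .ins 7 0 3, .chk 3 0 7 38 6 42 5, .del 6 3 38, .del 5 3 42, .ins 5 0 1,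
   .ins 6 0 2, .chk 0 1 5 2 6 3 7, .del 7 0 3, .ins 7 1 40, .chk 1 0 5 40 7 41 2, .del 5 0 1,
   .del 2 1 41, .ins 2 2 43, .ins 5 40 43, .chk 43 2 2 40 5 42 8, .del 8 42 43, .ins 8 32 40,
   .chk 40 1 7 32 8 43 5, .del 7 1 40, .del 5 40 43, .ins 5 20 32, .chk 32 20 5 27 4 40 8,
   .del 4 27 32, .del 8 32 40, .ins 4 2 39, .chk 2 0 6 39 4 43 2, .del 6 0 2, .del 2 2 43,
   .ins 2 4 13, .ins 6 13 25, .chk 13 4 2 10 0 25 6, .del 0 10 13, .ins 0 29 31, .ins 7 30 31,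
   .chk 31 29 0 30 7 33 3, .del 3 31 33, .ins 3 25 30, .ins 8 25 35, .chk 25 13 6 30 3 35 8,
   .del 6 13 25, .ins 6 30 34, .chk 30 25 3 31 7 34 6, .del 3 25 30, .del 7 30 31,
   .ins 3 26 29, .ins 7 29 35, .chk 29 26 3 31 0 35 7, .del 0 29 31, .ins 0 35 39,
   .chk 35 25 8 29 7 39 0, .del 8 25 35, .del 7 29 35, .ins 7 34 39, .chk 39 2 4 34 7 35 0,
   .del 4 2 39, .del 0 35 39, .ins 0 26 34, .chk 34 26 0 30 6 39 7, .del 6 30 34, .del 7 34 39,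
   .ins 4 12 26, .chk 26 12 4 29 3 34 0, .del 3 26 29, .del 0 26 34, .ins 0 4 9, .ins 3 4 17,
   .chk 4 9 0 13 2 17 3, .del 2 4 13, .ins 2 5 12, .ins 6 11 12, .chk 12 5 2 11 6 26 4,
   .del 4 12 26, .ins 4 11 20, .ins 7 17 20, .chk 20 11 4 17 7 32 5, .del 5 20 32, .ins 5 5 17,
   .chk 17 4 3 5 5 20 7, .del 3 4 17, .del 7 17 20, .ins 3 9 11, .chk 11 9 3 12 6 20 4,
   .del 6 11 12, .del 4 11 20, .ins 4 8 9, .chk 9 4 0 8 4 11 3, .del 0 4 9, .del 3 9 11,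
   .ins 0 5 8, .chk 5 8 0 12 2 17 5, .del 2 5 12, .del 5 5 17, .chk 8 5 0 9 4 14 1, .del 0 5 8,
   .del 4 8 9, .del 1 8 14]

lemma prog_wf : wf prog (fun _ => none) = true := by decide +kernel

lemma prog_run : run prog 1 1 1 = 0 := by decide +kernel

/-- The vertex data of a check operation. -/
def chkData : Op → Option (ℕ × ℕ × ℕ × ℕ)
  | .chk v a _ b _ d _ => some (v, a, b, d)
  | _ => none

def edgeB (a b : ℕ) : Bool :=
  g28EdgeList.any fun e => (Nat.beq e.1.val a && Nat.beq e.2.val b) ||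
    (Nat.beq e.1.val b && Nat.beq e.2.val a)

def okB (x : ℕ × ℕ × ℕ × ℕ) : Bool :=
  Nat.blt x.1 44 && Nat.blt x.2.1 44 && Nat.blt x.2.2.1 44 && Nat.blt x.2.2.2 44 &&
  edgeB x.1 x.2.1 && edgeB x.1 x.2.2.1 && edgeB x.1 x.2.2.2 &&
  neB x.1 x.2.1 && neB x.1 x.2.2.1 && neB x.1 x.2.2.2 &&
  neB x.2.1 x.2.2.1 && neB x.2.1 x.2.2.2 && neB x.2.2.1 x.2.2.2

lemma prog_ok : (prog.filterMap chkData).all okB = true := by decide +kernel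

lemma prog_nodup : ((prog.filterMap chkData).map fun x => x.1).Nodup := by decide +kernel

lemma neB_iff {a b : ℕ} : neB a b = true ↔ a ≠ b := by
  simp only [neB, Bool.not_eq_true', ne_eq]
  rw [← Bool.not_eq_true, Nat.beq_eq]

lemma edgeB_adj (a b : ℕ) (ha : a < 44) (hb : b < 44) (hne : a ≠ b) (h : edgeB a b = true) :
    g28.Adj ⟨a, ha⟩ ⟨b, hb⟩ := by
  simp only [edgeB, List.any_eq_true, Bool.or_eq_true, Bool.and_eq_true, Nat.beq_eq] at h
  obtain ⟨⟨x, y⟩, hm, h⟩ := h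
  rw [g28, SimpleGraph.fromRel_adj]
  refine ⟨fun h => hne (by simpa using h), ?_⟩
  rcases h with ⟨rfl, rfl⟩ | ⟨rfl, rfl⟩
  · exact Or.inl hm
  · exact Or.inr hm

lemma cost_sum (bad : ℕ → Bool) (l : List Op) :
    (l.map (cost bad)).sum = ((l.filterMap chkData).map fun x => x.1).countP bad := by
  induction l with
  | nil => rfl
  | cons o t ih =>
    cases o with
    | ins p a b =>
      rw [List.map_cons, List.sum_cons, ih, List.filterMap_cons_none (by rfl)]
      simp only [cost, zero_add]
    | del p a b =>
      rw [List.map_cons, List.sum_cons, ih, List.filterMap_cons_none (by rfl)]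
      simp only [cost, zero_add]
    | chk v a p b q d r =>
      rw [List.map_cons, List.sum_cons, ih]
      simp only [cost, List.filterMap_cons, chkData, List.map_cons, List.countP_cons]
      cases bad v <;> simp [add_comm]

/-- No symmetric colouring with three colours is proper outside two vertices. -/
theorem core (S : Finset (Fin 44)) (hS : S.card ≤ 2) (c : Fin 44 → Fin 44 → Fin 3)
    (hs : ∀ a b, c a b = c b a)
    (hp : ∀ v, v ∉ S → ∀ a b, g28.Adj v a → g28.Adj v b → a ≠ b → c v a ≠ c v b) : False := by
  classical
  let C : ℕ → ℕ → ℕ := fun a b => (c (Fin.ofNat 44 a) (Fin.ofNat 44 b)).val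
  let bad : ℕ → Bool := fun v => decide (v ∈ S.image Fin.val)
  have hbad : ∀ (v : ℕ) (hv : v < 44), bad v = false → (⟨v, hv⟩ : Fin 44) ∉ S := by
    intro v hv h hm
    have : v ∈ S.image Fin.val := Finset.mem_image.2 ⟨_, hm, rfl⟩
    simp only [bad, decide_eq_false_iff_not] at h
    exact h this
  have hC : ∀ (a b : ℕ) (ha : a < 44) (hb : b < 44), C a b = (c ⟨a, ha⟩ ⟨b, hb⟩).val := by
    intro a b ha hb
    have h1 : Fin.ofNat 44 a = ⟨a, ha⟩ := Fin.ext (Nat.mod_eq_of_lt ha)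
    have h2 : Fin.ofNat 44 b = ⟨b, hb⟩ := Fin.ext (Nat.mod_eq_of_lt hb)
    simp only [C, h1, h2]
  refine run_spec C (fun a b => (c _ _).isLt) (fun a b => by simp only [C, hs (Fin.ofNat 44 a)])
    bad prog (fun _ => none) 1 1 1 0 prog_wf ?_ ?_ ?_ ?_ ?_ prog_run
  · intro o ho
    cases o with
    | ins p a b => trivial
    | del p a b => trivial
    | chk v a p b q d r =>
      intro hb
      have hm : (v, a, b, d) ∈ prog.filterMap chkData := List.mem_filterMap.2 ⟨_, ho, rfl⟩
      have := List.all_eq_true.1 prog_ok _ hm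
      simp only [okB, Bool.and_eq_true, neB_iff, Nat.blt_eq] at this
      obtain ⟨⟨⟨⟨⟨⟨⟨⟨⟨⟨⟨⟨v4, a4⟩, b4⟩, d4⟩, ea⟩, eb⟩, ed⟩, va⟩, vb⟩, vd⟩, ab⟩, ad⟩, bd⟩ := this
      have Aa := edgeB_adj v a v4 a4 va ea
      have Ab := edgeB_adj v b v4 b4 vb eb
      have Ad := edgeB_adj v d v4 d4 vd ed
      have hv := hbad v v4 hb
      rw [hC v a v4 a4, hC v b v4 b4, hC v d v4 d4]
      refine ⟨fun h => ?_, fun h => ?_, fun h => ?_⟩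
      · exact hp _ hv _ _ Aa Ab (by simpa using ab) (Fin.ext h)
      · exact hp _ hv _ _ Aa Ad (by simpa using ad) (Fin.ext h)
      · exact hp _ hv _ _ Ab Ad (by simpa using bd) (Fin.ext h)
  · rw [cost_sum, zero_add, List.countP_eq_length_filter,
      ← List.toFinset_card_of_nodup (prog_nodup.filter _)]
    refine le_trans (Finset.card_le_card (t := S.image Fin.val) ?_)
      (Finset.card_image_le.trans hS)
    intro x hx
    rw [List.mem_toFinset, List.mem_filter] at hx
    exact of_decide_eq_true hx.2
  all_goals
    intro _
    simp [code, enc, width, val]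

/-! ### T-joins -/

/-- `b` is the boundary of an edge set of `H`. -/
def Bdry {V : Type*} [Fintype V] (H : SimpleGraph V) (b : V → ZMod 2) : Prop :=
  ∃ f : V → V → ZMod 2, (∀ u v, f u v = f v u) ∧ (∀ u v, ¬ H.Adj u v → f u v = 0) ∧
    ∀ v, ∑ w, f v w = b v

lemma Bdry.zero {V : Type*} [Fintype V] (H : SimpleGraph V) : Bdry H 0 :=
  ⟨fun _ _ => 0, by simp, by simp, by simp⟩

lemma Bdry.add {V : Type*} [Fintype V] {H : SimpleGraph V} {b c : V → ZMod 2}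
    (hb : Bdry H b) (hc : Bdry H c) : Bdry H (b + c) := by
  obtain ⟨f, f1, f2, f3⟩ := hb
  obtain ⟨g, g1, g2, g3⟩ := hc
  refine ⟨fun u v => f u v + g u v, fun u v => by simp only [f1 u v, g1 u v],
    fun u v h => by simp only [f2 u v h, g2 u v h, add_zero], fun v => ?_⟩
  rw [Finset.sum_add_distrib, f3, g3]; rfl

lemma Bdry.adj {V : Type*} [Fintype V] [DecidableEq V] {H : SimpleGraph V} {u v : V}
    (h : H.Adj u v) : Bdry H (Pi.single u 1 + Pi.single v 1) := by
  refine ⟨fun x y => (if x = u ∧ y = v then 1 else 0) + (if x = v ∧ y = u then 1 else 0),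
    fun x y => ?_, fun x y hxy => ?_, fun x => ?_⟩
  · simp only [and_comm, add_comm]
  · beta_reduce
    rw [if_neg, if_neg, add_zero]
    · rintro ⟨rfl, rfl⟩; exact hxy h.symm
    · rintro ⟨rfl, rfl⟩; exact hxy h
  · rw [Finset.sum_add_distrib]
    simp only [Pi.add_apply, Pi.single_apply, ite_and]
    congr 1 <;> split_ifs <;> simp

lemma add_self' {V : Type*} (b : V → ZMod 2) : b + b = 0 :=
  funext fun _ => CharTwo.add_self_eq_zero _

lemma Bdry.walk {V : Type*} [Fintype V] [DecidableEq V] {H : SimpleGraph V} {u v : V}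
    (p : H.Walk u v) : Bdry H (Pi.single u 1 + Pi.single v 1) := by
  induction p with
  | nil =>
    rw [add_self']; exact Bdry.zero H
  | @cons u v w h p ih =>
    have := (Bdry.adj h).add ih
    have e : (Pi.single u 1 + Pi.single v 1 + (Pi.single v 1 + Pi.single w 1) : V → ZMod 2) =
        Pi.single u 1 + Pi.single w 1 := by
      rw [add_assoc, ← add_assoc (Pi.single v 1), add_self', zero_add]
    rwa [e] at this

/-- Chosen root of the component of a vertex. -/
noncomputable def root {V : Type*} (H : SimpleGraph V) (v : V) : V :=
  (H.connectedComponentMk v).out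

lemma mk_root {V : Type*} (H : SimpleGraph V) (v : V) :
    H.connectedComponentMk (root H v) = H.connectedComponentMk v :=
  Quot.out_eq _

open Classical in
lemma tjoin {V : Type*} [Fintype V] (H : SimpleGraph V) (b : V → ZMod 2)
    (hb : ∀ K : H.ConnectedComponent,
      ∑ v ∈ Finset.univ.filter (fun v => H.connectedComponentMk v = K), b v = 0) : Bdry H b := by
  have e : b = ∑ v, b v • (Pi.single v 1 + Pi.single (root H v) 1 : V → ZMod 2) := by
    funext x
    simp only [Finset.sum_apply, Pi.smul_apply, Pi.add_apply, Pi.single_apply, smul_eq_mul,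
      mul_add, Finset.sum_add_distrib, mul_ite, mul_one, mul_zero]
    rw [Finset.sum_ite_eq, if_pos (Finset.mem_univ _), ← Finset.sum_filter]
    by_cases hx : root H x = x
    · rw [left_eq_add, ← hb (H.connectedComponentMk x)]
      congr 1
      ext v
      simp only [Finset.mem_filter, Finset.mem_univ, true_and]
      constructor
      · intro h; rw [h, mk_root]
      · intro h; rw [← hx, root, root, h]
    · rw [left_eq_add]
      apply Finset.sum_eq_zero
      intro v hv
      exfalso
      simp only [Finset.mem_filter, Finset.mem_univ, true_and] at hv
      apply hx
      have := mk_root H v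
      rw [← hv] at this
      rw [root, this]
      exact hv.symm
  rw [e]
  refine Finset.sum_induction _ (Bdry H) (fun _ _ => Bdry.add) (Bdry.zero H) fun v _ => ?_
  have h01 : ∀ z : ZMod 2, z = 0 ∨ z = 1 := by decide
  rcases h01 (b v) with h | h
  · rw [h, zero_smul]; exact Bdry.zero H
  · rw [h, one_smul]
    obtain ⟨p⟩ := SimpleGraph.ConnectedComponent.exact (mk_root H v).symm
    exact Bdry.walk p

/-! ### Consequences for `g28` -/

/-- Neighbours of a vertex, read off an edge list. -/
def nb (E : List (Fin 44 × Fin 44)) (v : Fin 44) : List (Fin 44) :=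
  ((E.filter fun e => Nat.beq e.1.val v.val).map fun e => e.2) ++
    (E.filter fun e => Nat.beq e.2.val v.val).map fun e => e.1

lemma mem_nb (E : List (Fin 44 × Fin 44)) (v w : Fin 44) :
    w ∈ nb E v ↔ (v, w) ∈ E ∨ (w, v) ∈ E := by
  simp only [nb, List.mem_append, List.mem_map, List.mem_filter, Nat.beq_eq, Fin.val_inj,
    Prod.exists]
  constructor
  · rintro (⟨a, b, ⟨h, rfl⟩, rfl⟩ | ⟨a, b, ⟨h, rfl⟩, rfl⟩)
    exacts [Or.inl h, Or.inr h]
  · rintro (h | h)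
    exacts [Or.inl ⟨_, _, ⟨h, rfl⟩, rfl⟩, Or.inr ⟨_, _, ⟨h, rfl⟩, rfl⟩]

lemma card_nb (E : List (Fin 44 × Fin 44)) (v : Fin 44) (h1 : (nb E v).Nodup) (h2 : v ∉ nb E v) :
    Nat.card ((SimpleGraph.fromRel fun a b => (a, b) ∈ E).neighborSet v) = (nb E v).length := by
  have e : (SimpleGraph.fromRel fun a b => (a, b) ∈ E).neighborSet v =
      ((nb E v).toFinset : Set (Fin 44)) := by
    ext w
    rw [SimpleGraph.mem_neighborSet, SimpleGraph.fromRel_adj, List.coe_toFinset]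
    change _ ↔ w ∈ nb E v
    rw [mem_nb]
    refine ⟨fun h => h.2, fun h => ⟨?_, h⟩⟩
    rintro rfl
    exact h2 ((mem_nb _ _ _).2 h)
  rw [e, ← List.toFinset_card_of_nodup h1]
  exact Nat.card_eq_finsetCard _

lemma g28_cubic : IsCubic g28 := by
  intro v
  have key : ∀ v, (nb g28EdgeList v).Nodup ∧ v ∉ nb g28EdgeList v ∧
      (nb g28EdgeList v).length = 3 := by decide +kernel
  obtain ⟨h1, h2, h3⟩ := key v
  rw [← h3]
  exact card_nb _ _ h1 h2

/-- Removing at most two vertices leaves an uncolourable graph. -/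
theorem not_colorable_induce (S : Finset (Fin 44)) (hS : S.card ≤ 2) (T : Set (Fin 44))
    (hT : ∀ v, v ∉ S → v ∈ T) : ¬ ThreeEdgeColorable (g28.induce T) := by
  classical
  rintro ⟨c, hc⟩
  -- colours of the darts at a remaining vertex
  have key : ∀ v : Fin 44, ∃ f : Fin 44 → Fin 3, v ∉ S →
      (∀ a b, g28.Adj v a → g28.Adj v b → a ≠ b → f a ≠ f b) ∧
      ∀ (a : Fin 44) (hv : v ∈ T) (ha : a ∈ T), a ∉ S → g28.Adj v a → f a = c s(⟨v, hv⟩, ⟨a, ha⟩) := by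
    intro v
    by_cases hv : v ∈ S
    · exact ⟨fun _ => 0, fun h => absurd hv h⟩
    have hvT := hT v hv
    let g : g28.neighborSet v → Fin 3 := fun a =>
      if h : (a : Fin 44) ∈ T then c s(⟨v, hvT⟩, ⟨a, h⟩) else 0
    have hcard : Fintype.card (g28.neighborSet v) = (Finset.univ : Finset (Fin 3)).card := by
      rw [← Nat.card_eq_fintype_card, g28_cubic v]; rfl
    obtain ⟨e, he⟩ := Finset.exists_equiv_extend_of_card_eq hcard
      (s := Finset.univ.filter fun a : g28.neighborSet v => (a : Fin 44) ∉ S) (f := g)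
      (Finset.subset_univ _) (by
        rintro ⟨a, ha⟩ ha' ⟨b, hb⟩ hb' hab
        simp only [Finset.coe_filter, Finset.mem_univ, true_and, Set.mem_ofPred_eq] at ha' hb'
        simp only [g, dif_pos (hT a ha'), dif_pos (hT b hb')] at hab
        by_contra hne
        have hne' : a ≠ b := fun h => hne (by simp [h])
        refine hc s(⟨v, hvT⟩, ⟨a, hT a ha'⟩) s(⟨v, hvT⟩, ⟨b, hT b hb'⟩) ?_ ?_ ?_
          ⟨⟨v, hvT⟩, by simp, by simp⟩ hab
        · simpa using ha
        · simpa using hb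
        · intro h
          rw [Sym2.congr_right] at h
          exact hne' (congrArg Subtype.val h))
    refine ⟨fun a => if h : g28.Adj v a then (e ⟨a, h⟩ : Fin 3) else 0, fun _ => ⟨?_, ?_⟩⟩
    · intro a b ha hb hab h
      simp only [dif_pos ha, dif_pos hb] at h
      have := e.injective (Subtype.ext h)
      exact hab (congrArg Subtype.val this)
    · intro a hv' ha haS hadj
      simp only [dif_pos hadj]
      rw [he ⟨a, hadj⟩ (by simpa using haS)]
      simp only [g, dif_pos ha]
  choose f hf using key
  let d : Fin 44 → Fin 44 → Fin 3 := fun a b =>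
    if a ∉ S then f a b else if b ∉ S then f b a else 0
  let D : Fin 44 → Fin 44 → Fin 3 := fun a b => d (min a b) (max a b)
  have hD : ∀ v a, v ∉ S → g28.Adj v a → D v a = f v a := by
    intro v a hv ha
    have hsym : a ∉ S → f a v = f v a := by
      intro haS
      rw [(hf a haS).2 v (hT a haS) (hT v hv) hv ha.symm,
        (hf v hv).2 a (hT v hv) (hT a haS) haS ha, Sym2.eq_swap]
    rcases le_total v a with h | h
    · simp only [D, d, min_eq_left h, max_eq_right h, if_pos hv]
    · simp only [D, d, min_eq_right h, max_eq_left h, if_pos hv]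
      by_cases haS : a ∉ S
      · rw [if_pos haS, hsym haS]
      · rw [if_neg haS]
  refine core S hS D (fun a b => by simp only [D, min_comm a, max_comm a]) ?_
  intro v hv a b ha hb hab
  rw [hD v a hv ha, hD v b hv hb]
  exact (hf v hv).1 a b ha hb hab

lemma g28_not_colorable : ¬ ThreeEdgeColorable g28 := by
  rintro ⟨c, hc⟩
  refine not_colorable_induce ∅ (by simp) Set.univ (fun v _ => trivial)
    ⟨fun e => c (e.map Subtype.val), ?_⟩
  intro e₁ e₂ h₁ h₂ hne ⟨v, hv₁, hv₂⟩
  refine hc _ _ ?_ ?_ ?_ ⟨v, Sym2.mem_map.2 ⟨v, hv₁, rfl⟩, Sym2.mem_map.2 ⟨v, hv₂, rfl⟩⟩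
  · induction e₁ with | _ a b => simpa using h₁
  · induction e₂ with | _ a b => simpa using h₂
  · exact fun h => hne (Sym2.map.injective Subtype.val_injective h)

lemma g28_resistance : 3 ≤ resistance g28 := by
  classical
  refine le_csInf ⟨_, Set.univ, rfl, fun _ => 0, ?_⟩ ?_
  · rintro e₁ e₂ - - - ⟨v, -⟩
    exact absurd (Set.mem_univ v.1) v.2
  · rintro n ⟨S, rfl, h⟩
    by_contra hlt
    refine not_colorable_induce S.toFinset ?_ Sᶜ (fun v hv => by simpa using hv) h
    rw [← Set.ncard_eq_toFinset_card']
    omega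

/-- A 2-factor has at least three odd components. -/
lemma odd_ge (H : SimpleGraph (Fin 44)) (hH : IsTwoFactor g28 H) : 3 ≤ oddComponentCount H := by
  classical
  by_contra hlt
  obtain ⟨hle, hdeg⟩ := hH
  let P : H.ConnectedComponent → Prop := fun K => Odd (Nat.card K.supp)
  let S : Finset (Fin 44) := Finset.univ.filter fun v =>
    root H v = v ∧ P (H.connectedComponentMk v)
  have hS : S.card ≤ 2 := by
    have h1 : S.card ≤ oddComponentCount H := by
      rw [oddComponentCount, ← Fintype.card_coe S, ← Nat.card_eq_fintype_card]
      refine Nat.card_le_card_of_injective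
        (fun v : S => (⟨H.connectedComponentMk v, (Finset.mem_filter.1 v.2).2.2⟩ :
          {C : H.ConnectedComponent // Odd (Nat.card C.supp)})) ?_
      intro a b hab
      have hab : H.connectedComponentMk (a : Fin 44) = H.connectedComponentMk (b : Fin 44) :=
        congrArg Subtype.val hab
      apply Subtype.ext
      rw [← (Finset.mem_filter.1 a.2).2.1, ← (Finset.mem_filter.1 b.2).2.1, root, root, hab]
    omega
  obtain ⟨f, f1, f2, f3⟩ := tjoin H (fun v => if v ∈ S then 0 else 1) (by
    intro K
    have e : ∀ v, (if v ∈ S then 0 else 1 : ZMod 2) = 1 + (if v ∈ S then 1 else 0) := by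
      intro v; split_ifs <;> decide
    rw [Finset.sum_congr rfl fun v _ => e v, Finset.sum_add_distrib, Finset.sum_boole,
      Finset.filter_filter, Finset.sum_const, nsmul_one]
    have hc : (Finset.univ.filter fun v => H.connectedComponentMk v = K).card =
        Nat.card K.supp := by
      rw [Nat.card_eq_fintype_card, Fintype.card_subtype]
      congr 1
      ext v
      simp [SimpleGraph.ConnectedComponent.mem_supp_iff]
    rw [hc]
    by_cases hK : P K
    · have : (Finset.univ.filter fun v => H.connectedComponentMk v = K ∧ v ∈ S) = {K.out} := by
        ext v
        simp only [S, Finset.mem_filter, Finset.mem_univ, true_and, Finset.mem_singleton]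
        constructor
        · rintro ⟨rfl, h, -⟩; exact h.symm
        · rintro rfl
          have : H.connectedComponentMk K.out = K := Quot.out_eq K
          refine ⟨this, ?_, ?_⟩
          · rw [root, this]
          · rw [this]; exact hK
      rw [this, Finset.card_singleton, (ZMod.natCast_eq_one_iff_odd).2 hK]
      decide
    · have : (Finset.univ.filter fun v => H.connectedComponentMk v = K ∧ v ∈ S) = ∅ := by
        ext v
        simp only [S, Finset.mem_filter, Finset.mem_univ, true_and, Finset.notMem_empty,
          iff_false]
        rintro ⟨rfl, -, h⟩
        exact hK h
      rw [this, Finset.card_empty, (ZMod.natCast_eq_zero_iff_even).2 (Nat.not_odd_iff_even.1 hK)]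
      decide)
  have hd2 : ∀ v, (Finset.univ.filter fun w => H.Adj v w).card = 2 := by
    intro v
    rw [← hdeg v, Nat.card_eq_fintype_card, Fintype.card_subtype]
    rfl
  have hd3 : ∀ v, (Finset.univ.filter fun w => g28.Adj v w).card = 3 := by
    intro v
    rw [← g28_cubic v, Nat.card_eq_fintype_card, Fintype.card_subtype]
    rfl
  refine core S hS (fun a b => if H.Adj a b then (if f a b = 0 then 0 else 1) else 2) ?_ ?_
  · intro a b
    simp only [f1 a b, H.adj_comm a b]
  · intro v hv a b ha hb hab
    by_cases hHa : H.Adj v a <;> by_cases hHb : H.Adj v b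
    · simp only [if_pos hHa, if_pos hHb]
      have hN : (Finset.univ.filter fun w => H.Adj v w) = {a, b} := by
        symm
        apply Finset.eq_of_subset_of_card_le
        · intro x hx
          rcases Finset.mem_insert.1 hx with rfl | hx
          · simpa using hHa
          · rw [Finset.mem_singleton.1 hx]; simpa using hHb
        · rw [hd2, Finset.card_pair hab]
      have hsum : ∑ w, f v w = if v ∈ S then 0 else 1 := f3 v
      rw [if_neg hv, ← Finset.sum_filter_of_ne (p := fun w => H.Adj v w)
        (fun w _ hw => by by_contra h; exact hw (f2 v w h)), hN, Finset.sum_pair hab] at hsum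
      have h01 : ∀ x y : ZMod 2, x + y = 1 →
          (if x = 0 then 0 else 1 : Fin 3) ≠ (if y = 0 then 0 else 1) := by decide
      exact h01 _ _ hsum
    · simp only [if_pos hHa, if_neg hHb]
      split_ifs <;> decide
    · simp only [if_neg hHa, if_pos hHb]
      split_ifs <;> decide
    · exfalso
      have hsub : insert a (insert b (Finset.univ.filter fun w => H.Adj v w)) ⊆
          (Finset.univ.filter fun w => g28.Adj v w) := by
        intro x hx
        simp only [Finset.mem_insert, Finset.mem_filter, Finset.mem_univ, true_and] at hx ⊢
        rcases hx with rfl | rfl | hx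
        exacts [ha, hb, hle hx]
      have := Finset.card_le_card hsub
      rw [hd3, Finset.card_insert_of_notMem (by simp [hab, hHa]),
        Finset.card_insert_of_notMem (by simp [hHb]), hd2] at this
      omega

/-- The edges of a 2-factor of `g28`. -/
def factorList : List (Fin 44 × Fin 44) :=
  [(0, 2), (0, 3), (1, 40), (1, 41), (2, 43), (3, 42), (4, 13), (4, 17), (5, 12), (5, 17),
   (6, 15), (6, 19), (7, 16), (7, 18), (8, 9), (8, 14), (9, 11), (10, 16), (10, 22), (11, 20),
   (12, 26), (13, 25), (14, 21), (15, 23), (18, 22), (19, 27), (20, 32), (21, 37), (23, 27), (24, 28),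
   (24, 36), (25, 35), (26, 29), (28, 33), (29, 31), (30, 31), (30, 34), (32, 40), (33, 41), (34, 39),
   (35, 39), (36, 38), (37, 38), (42, 43)]

lemma factor_isTwoFactor :
    IsTwoFactor g28 (SimpleGraph.fromRel fun a b => (a, b) ∈ factorList) := by
  have hsub : (factorList.all fun e => edgeB e.1.val e.2.val) = true := by decide +kernel
  rw [List.all_eq_true] at hsub
  constructor
  · intro a b h
    rw [SimpleGraph.fromRel_adj] at h
    obtain ⟨hne, h | h⟩ := h
    · exact edgeB_adj a b a.2 b.2 (Fin.val_ne_of_ne hne) (hsub _ h)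
    · exact (edgeB_adj b a b.2 a.2 (Fin.val_ne_of_ne hne.symm) (hsub _ h)).symm
  · intro v
    have key : ∀ v, (nb factorList v).Nodup ∧ v ∉ nb factorList v ∧
        (nb factorList v).length = 2 := by decide +kernel
    obtain ⟨h1, h2, h3⟩ := key v
    rw [← h3]
    exact card_nb _ _ h1 h2

lemma g28_oddness : 4 ≤ oddness g28 := by
  refine le_csInf ⟨_, _, factor_isTwoFactor, rfl⟩ ?_
  rintro n ⟨H, hH, rfl⟩
  have h3 := odd_ge H hH
  have hpar : ¬ Odd (oddComponentCount H) := by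
    have h := SimpleGraph.odd_ncard_oddComponents H
    have e : oddComponentCount H = H.oddComponents.ncard := rfl
    rw [e, h, Nat.card_fin]
    decide
  have : oddComponentCount H ≠ 3 := fun h => hpar (by rw [h]; decide)
  omega

end G28Aux

/-- The graph `G28` is cubic, admits no proper 3-edge-colouring, has resistance at
least 3 (removing any two vertices leaves an uncolourable graph), and oddness at
least 4. -/
theorem g28_properties :
    IsCubic g28 ∧
    ¬ ThreeEdgeColorable g28 ∧
    (∀ u w : Fin 44, ¬ ThreeEdgeColorable (g28.induce ({u, w}ᶜ : Set (Fin 44)))) ∧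
    3 ≤ resistance g28 ∧
    4 ≤ oddness g28 := by
  refine ⟨G28Aux.g28_cubic, G28Aux.g28_not_colorable, fun u w => ?_, G28Aux.g28_resistance,
    G28Aux.g28_oddness⟩
  exact G28Aux.not_colorable_induce {u, w} Finset.card_le_two _ (fun v hv => by simpa using hv)
end

section
/- Let G be a connected simple cubic graph in which any two cycles have a vertex in common. Then G is isomorphic to the complete graph K4 or to the complete bipartite graph K(3,3). (Equivalently, for a connected cubic graph G, the cyclic connectivity ζ(G) attains its upper bound β(G) = |E(G)| − |V(G)| + 1 precisely in these cases, together with the multigraph consisting of two vertices joined by three parallel edges.) -/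
set_option linter.unusedSimpArgs false
set_option linter.unusedVariables false
set_option linter.style.haveILetI false
set_option maxHeartbeats 1000000

open SimpleGraph in
/-- A finite nonempty acyclic graph has a vertex with at most one neighbour. -/
lemma acyclic_leaf {W : Type*} [Finite W] [Nonempty W] (H : SimpleGraph W) (hH : H.IsAcyclic) :
    ∃ u : W, ∀ x y, H.Adj u x → H.Adj u y → x = y := by
  classical
  haveI := Fintype.ofFinite W
  let P : ℕ → Prop := fun n => ∃ (u v : W) (p : H.Walk u v), p.IsPath ∧ p.length = n
  have hP0 : P 0 := ⟨Classical.arbitrary W, _, Walk.nil, by simp, rfl⟩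
  have hspec := Nat.findGreatest_spec (P := P) (Nat.zero_le (Fintype.card W)) hP0
  obtain ⟨u, v, p, hp, hl⟩ := hspec
  have key : ∀ x, H.Adj u x → x = p.snd := by
    intro x hx
    have hmem : x ∈ p.support := by
      by_contra hn
      have hp' : (Walk.cons hx.symm p).IsPath := by
        rw [Walk.cons_isPath_iff]; exact ⟨hp, hn⟩
      have hle := Nat.le_findGreatest (P := P) hp'.length_lt.le ⟨_, _, _, hp', rfl⟩
      rw [Walk.length_cons] at hle
      omega
    exact hH.eq_snd_of_adj_start hp hx hmem
  exact ⟨u, fun x y hx hy => (key x hx).trans (key y hy).symm⟩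

open SimpleGraph in
/-- Closing a path with an edge. -/
lemma close_path {V : Type*} {G : SimpleGraph V} {a b : V} (p : G.Walk a b) (hp : p.IsPath)
    (h : G.Adj b a) (hl : 2 ≤ p.length) : (Walk.cons h p).IsCycle := by
  rw [Walk.isCycle_iff_isPath_tail_and_le_length]
  refine ⟨by simpa using hp, ?_⟩
  rw [Walk.length_cons]; omega

open SimpleGraph in
/-- The complement of a cycle-containing set is acyclic, so it has a vertex with two
neighbours in the set. -/
lemma exists_two {V : Type*} [Fintype V] (G : SimpleGraph V)
    (hN : ∀ v x y, ∃ z, G.Adj v z ∧ z ≠ x ∧ z ≠ y)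
    (hcub : ∀ v x y z, x ≠ y → x ≠ z → y ≠ z → G.Adj v x → G.Adj v y → G.Adj v z →
      ∀ w, G.Adj v w → w = x ∨ w = y ∨ w = z)
    (hmeet : ∀ (u w : V) (p : G.Walk u u) (q : G.Walk w w),
      p.IsCycle → q.IsCycle → ∃ z : V, z ∈ p.support ∧ z ∈ q.support)
    {u : V} (C : G.Walk u u) (hC : C.IsCycle) (T : Set V) (hT : ∀ z ∈ C.support, z ∈ T)
    (hne : ∃ v, v ∉ T) :
    ∃ v, v ∉ T ∧ ∃ x ∈ T, ∃ y ∈ T, x ≠ y ∧ G.Adj v x ∧ G.Adj v y := by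
  obtain ⟨v₀, hv₀⟩ := hne
  haveI : Nonempty ↥(Tᶜ) := ⟨⟨v₀, hv₀⟩⟩
  have hac : (G.induce Tᶜ).IsAcyclic := by
    intro w q hq
    let f : (G.induce Tᶜ) ↪g G := Embedding.induce Tᶜ
    have hq' : (q.map f.toHom).IsCycle := hq.map f.injective
    obtain ⟨z, hz1, hz2⟩ := hmeet _ _ C _ hC hq'
    rw [Walk.support_map, List.mem_map] at hz2
    obtain ⟨z', _, rfl⟩ := hz2
    exact z'.2 (hT _ hz1)
  obtain ⟨⟨v, hv⟩, hleaf⟩ := acyclic_leaf _ hac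
  refine ⟨v, hv, ?_⟩
  have hleaf' : ∀ x y, x ∉ T → y ∉ T → G.Adj v x → G.Adj v y → x = y := by
    intro x y hx hy h1 h2
    have := hleaf ⟨x, hx⟩ ⟨y, hy⟩ h1 h2
    simpa using this
  obtain ⟨x, hx, -, -⟩ := hN v v v
  obtain ⟨y, hy, hyx, -⟩ := hN v x x
  obtain ⟨z, hz, hzx, hzy⟩ := hN v x y
  by_cases h1 : x ∈ T <;> by_cases h2 : y ∈ T <;> by_cases h3 : z ∈ T <;> grind

open SimpleGraph in
/-- If at most two half-edges leave `T`, then `T` is everything. -/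
lemma fill {V : Type*} (G : SimpleGraph V)
    (hN : ∀ v x y, ∃ z, G.Adj v z ∧ z ≠ x ∧ z ≠ y)
    (B : Set V)
    (hB : ∀ T : Set V, (∀ z ∈ B, z ∈ T) → (∃ v, v ∉ T) →
      ∃ v, v ∉ T ∧ ∃ x ∈ T, ∃ y ∈ T, x ≠ y ∧ G.Adj v x ∧ G.Adj v y)
    (T : Set V) (hT : ∀ z ∈ B, z ∈ T) (p q : V)
    (hp : ∀ x y, x ∉ T → y ∉ T → G.Adj p x → G.Adj p y → x = y)
    (hq : ∀ x y, x ∉ T → y ∉ T → G.Adj q x → G.Adj q y → x = y)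
    (ho : ∀ t ∈ T, ∀ x, x ∉ T → G.Adj t x → t = p ∨ t = q) : ∀ v, v ∈ T := by
  by_contra hcon
  push Not at hcon
  obtain ⟨v, hv, x, hx, y, hy, hxy, hvx, hvy⟩ := hB T hT hcon
  have e1 := ho x hx v hv hvx.symm
  have e2 := ho y hy v hv hvy.symm
  obtain ⟨w, hw, hwx, hwy⟩ := hN v x y
  have hwT : w ∉ T := by
    intro h
    have := ho w h v hv hw.symm
    grind
  have hwv : w ≠ v := hw.ne'
  obtain ⟨s, hs, a, ha, b, hb, hab, hsa, hsb⟩ := hB (insert v T)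
    (fun z hz => Or.inr (hT z hz)) ⟨w, by simp [hwT, hwv]⟩
  have hs1 : s ≠ v := by rintro rfl; simp at hs
  have hs2 : s ∉ T := fun h => hs (Or.inr h)
  have aux : ∀ t ∈ T, ¬ G.Adj s t := by
    intro t ht hst
    have e3 := ho t ht s hs2 hst.symm
    have h1 := hp s v hs2 hv
    have h2 := hq s v hs2 hv
    have h3 := hst.symm
    have h4 := hvx.symm
    have h5 := hvy.symm
    rcases e3 with rfl | rfl <;> rcases e1 with rfl | rfl <;> rcases e2 with rfl | rfl <;> tauto
  rcases ha with rfl | ha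
  · rcases hb with rfl | hb
    · exact hab rfl
    · exact aux b hb hsb
  · exact aux a ha hsa

lemma inj3 {V : Type*} {a b c : V} (h1 : a ≠ b) (h2 : a ≠ c) (h3 : b ≠ c) :
    Function.Injective ![a, b, c] := by
  intro i j hij
  fin_cases i <;> fin_cases j <;> simp_all

lemma inj4 {V : Type*} {a b c d : V} (h1 : a ≠ b) (h2 : a ≠ c) (h3 : a ≠ d) (h4 : b ≠ c)
    (h5 : b ≠ d) (h6 : c ≠ d) : Function.Injective ![a, b, c, d] := by
  intro i j hij
  fin_cases i <;> fin_cases j <;> simp_all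

open SimpleGraph in
lemma case3 {V : Type*} (G : SimpleGraph V)
    (hN : ∀ v x y, ∃ z, G.Adj v z ∧ z ≠ x ∧ z ≠ y)
    (hcub : ∀ v x y z, x ≠ y → x ≠ z → y ≠ z → G.Adj v x → G.Adj v y → G.Adj v z →
      ∀ w, G.Adj v w → w = x ∨ w = y ∨ w = z)
    (B : Set V)
    (hB : ∀ T : Set V, (∀ z ∈ B, z ∈ T) → (∃ v, v ∉ T) →
      ∃ v, v ∉ T ∧ ∃ x ∈ T, ∃ y ∈ T, x ≠ y ∧ G.Adj v x ∧ G.Adj v y)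
    (a b c v : V) (hBe : ∀ z ∈ B, z = a ∨ z = b ∨ z = c) (hv : v ≠ c)
    (hab : G.Adj a b) (hac : G.Adj a c) (hbc : G.Adj b c) (hva : G.Adj v a) (hvb : G.Adj v b) :
    Nonempty (G ≃g (⊤ : SimpleGraph (Fin 4))) := by
  have na := hcub a b c v hbc.ne hvb.ne' hv.symm hab hac hva.symm
  have nb := hcub b a c v hac.ne hva.ne' hv.symm hab.symm hbc hvb.symm
  have hall : ∀ w, w ∈ ({a, b, c, v} : Set V) := by
    apply fill G hN B hB _ _ c v
    · intro x y hx hy h1 h2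
      by_contra hxy
      have := hcub c a b x hab.ne (by (clear hN hcub hB; grind)) (by (clear hN hcub hB; grind)) hac.symm hbc.symm h1 y h2
      (clear hN hcub hB; grind)
    · intro x y hx hy h1 h2
      by_contra hxy
      have := hcub v a b x hab.ne (by (clear hN hcub hB; grind)) (by (clear hN hcub hB; grind)) hva hvb h1 y h2
      (clear hN hcub hB; grind)
    · intro t ht x hx h
      have := na x
      have := nb x
      (clear hN hcub hB; grind)
    · intro z hz
      have := hBe z hz
      (clear hN hcub hB; grind)
  have hvc : G.Adj v c := by
    obtain ⟨z, hz, h1, h2⟩ := hN v a b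
    have := hall z
    have := hz.ne
    (clear hN hcub hB; grind)
  have h1 := hab.ne
  have h2 := hac.ne
  have h3 := hbc.ne
  have h4 := hva.ne'
  have h5 := hvb.ne'
  let f : Fin 4 → V := ![a, b, c, v]
  have hf : Function.Bijective f := by
    constructor
    · exact inj4 h1 h2 h4 h3 h5 hv.symm
    · intro w
      rcases hall w with rfl | rfl | rfl | rfl
      exacts [⟨0, rfl⟩, ⟨1, rfl⟩, ⟨2, rfl⟩, ⟨3, rfl⟩]
  refine ⟨Iso.symm ⟨Equiv.ofBijective f hf, ?_⟩⟩
  intro i j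
  have s1 := hab.symm
  have s2 := hac.symm
  have s3 := hbc.symm
  have s4 := hva.symm
  have s5 := hvb.symm
  have s6 := hvc.symm
  fin_cases i <;> fin_cases j <;> simp [f, hab, hac, hbc, hva, hvb, hvc, s1, s2, s3, s4, s5, s6]

open SimpleGraph in
lemma k33 {V : Type*} (G : SimpleGraph V)
    (hcub : ∀ v x y z, x ≠ y → x ≠ z → y ≠ z → G.Adj v x → G.Adj v y → G.Adj v z →
      ∀ w, G.Adj v w → w = x ∨ w = y ∨ w = z)
    (htf : ∀ x y z, G.Adj x y → G.Adj y z → ¬ G.Adj x z)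
    (a c y b d v : V) (hall : ∀ w, w ∈ ({a, b, c, d, v, y} : Set V))
    (hac : a ≠ c) (hay : a ≠ y) (hcy : c ≠ y) (hbd : b ≠ d) (hbv : b ≠ v) (hdv : d ≠ v)
    (h1 : G.Adj a b) (h2 : G.Adj a d) (h3 : G.Adj a v)
    (h4 : G.Adj c b) (h5 : G.Adj c d) (h6 : G.Adj c v)
    (h7 : G.Adj y b) (h8 : G.Adj y d) (h9 : G.Adj y v) :
    Nonempty (G ≃g completeBipartiteGraph (Fin 3) (Fin 3)) := by
  let f : Fin 3 ⊕ Fin 3 → V := Sum.elim ![a, c, y] ![b, d, v]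
  have n1 := h1.ne
  have n2 := h2.ne
  have n3 := h3.ne
  have n4 := h4.ne
  have n5 := h5.ne
  have n6 := h6.ne
  have n7 := h7.ne
  have n8 := h8.ne
  have n9 := h9.ne
  have s1 := h1.symm
  have s2 := h2.symm
  have s3 := h3.symm
  have s4 := h4.symm
  have s5 := h5.symm
  have s6 := h6.symm
  have s7 := h7.symm
  have s8 := h8.symm
  have s9 := h9.symm
  have L : ∀ i j : Fin 3, ¬ G.Adj (![a, c, y] i) (![a, c, y] j) := by
    intro i j
    refine fun h => htf _ b _ (?_) (?_) h
    · fin_cases i <;> simp [h1, h2, h3, h4, h5, h6, h7, h8, h9, s1, s2, s3, s4, s5, s6, s7, s8, s9]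
    · fin_cases j <;> simp [h1, h2, h3, h4, h5, h6, h7, h8, h9, s1, s2, s3, s4, s5, s6, s7, s8, s9]
  have R : ∀ i j : Fin 3, ¬ G.Adj (![b, d, v] i) (![b, d, v] j) := by
    intro i j
    refine fun h => htf _ a _ (?_) (?_) h
    · fin_cases i <;> simp [h1, h2, h3, h4, h5, h6, h7, h8, h9, s1, s2, s3, s4, s5, s6, s7, s8, s9]
    · fin_cases j <;> simp [h1, h2, h3, h4, h5, h6, h7, h8, h9, s1, s2, s3, s4, s5, s6, s7, s8, s9]
  have M : ∀ i j : Fin 3, G.Adj (![a, c, y] i) (![b, d, v] j) := by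
    intro i j
    fin_cases i <;> fin_cases j <;> simp [h1, h2, h3, h4, h5, h6, h7, h8, h9, s1, s2, s3, s4, s5, s6, s7, s8, s9]
  have hf : Function.Bijective f := by
    constructor
    · have l : Function.Injective ![a, c, y] := inj3 hac hay hcy
      have r : Function.Injective ![b, d, v] := inj3 hbd hbv hdv
      exact l.sumElim r (fun i j => (M i j).ne)
    · intro w
      rcases hall w with rfl | rfl | rfl | rfl | rfl | rfl
      exacts [⟨.inl 0, rfl⟩, ⟨.inr 0, rfl⟩, ⟨.inl 1, rfl⟩, ⟨.inr 1, rfl⟩, ⟨.inr 2, rfl⟩,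
        ⟨.inl 2, rfl⟩]
  refine ⟨Iso.symm ⟨Equiv.ofBijective f hf, ?_⟩⟩
  intro i j
  rcases i with i | i <;> rcases j with j | j
  · simpa [f] using L i j
  · simpa [f] using M i j
  · simpa [f] using (M j i).symm
  · simpa [f] using R i j

open SimpleGraph in
lemma case4 {V : Type*} (G : SimpleGraph V)
    (hN : ∀ v x y, ∃ z, G.Adj v z ∧ z ≠ x ∧ z ≠ y)
    (hcub : ∀ v x y z, x ≠ y → x ≠ z → y ≠ z → G.Adj v x → G.Adj v y → G.Adj v z →
      ∀ w, G.Adj v w → w = x ∨ w = y ∨ w = z)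
    (htf : ∀ x y z, G.Adj x y → G.Adj y z → ¬ G.Adj x z)
    (B : Set V)
    (hB : ∀ T : Set V, (∀ z ∈ B, z ∈ T) → (∃ v, v ∉ T) →
      ∃ v, v ∉ T ∧ ∃ x ∈ T, ∃ y ∈ T, x ≠ y ∧ G.Adj v x ∧ G.Adj v y)
    (a b c d v : V) (hBe : ∀ z ∈ B, z = a ∨ z = b ∨ z = c ∨ z = d)
    (hac : a ≠ c) (hbd : b ≠ d) (hvb : v ≠ b) (hvd : v ≠ d)
    (h1 : G.Adj a b) (h2 : G.Adj b c) (h3 : G.Adj c d) (h4 : G.Adj d a)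
    (hva : G.Adj v a) (hvc : G.Adj v c) :
    Nonempty (G ≃g completeBipartiteGraph (Fin 3) (Fin 3)) := by
  have na := hcub a b d v hbd hvb.symm hvd.symm h1 h4.symm hva.symm
  have nc := hcub c b d v hbd hvb.symm hvd.symm h2.symm h3 hvc.symm
  have t1 := htf a b d h1
  have t2 := htf b a v h1.symm hva.symm
  have t3 := htf d a v h4 hva.symm
  have t4 := htf b a d h1.symm h4.symm
  -- two-neighbour vertices have at most one further neighbour
  have lim : ∀ p s t, s ≠ t → G.Adj p s → G.Adj p t → ∀ (T : Set V), s ∈ T → t ∈ T →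
      ∀ x y, x ∉ T → y ∉ T → G.Adj p x → G.Adj p y → x = y := by
    intro p s t hst hs ht T hsT htT x y hx hy hpx hpy
    by_contra hxy
    have := hcub p s t x hst (by (clear hN hcub hB htf; (try clear lim); (try clear close); (try clear fin); grind)) (by (clear hN hcub hB htf; (try clear lim); (try clear close); (try clear fin); grind)) hs ht hpx y hpy
    (clear hN hcub hB htf; (try clear lim); (try clear close); (try clear fin); grind)
  have hne : ∃ x, x ∉ ({a, b, c, d, v} : Set V) := by
    obtain ⟨x, hx, hxa, hxc⟩ := hN b a c
    refine ⟨x, ?_⟩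
    rintro (rfl | rfl | rfl | rfl | rfl)
    exacts [hxa rfl, hx.ne rfl, hxc rfl, t4 hx, t2 hx]
  obtain ⟨y, hy, s, hs, t, ht, hst, hys, hyt⟩ := hB {a, b, c, d, v} (by
    intro z hz
    have := hBe z hz
    (clear hN hcub hB htf; (try clear lim); (try clear close); (try clear fin); grind)) hne
  have hya : y ≠ a := by rintro rfl; simp at hy
  have hyb : y ≠ b := by rintro rfl; simp at hy
  have hyc : y ≠ c := by rintro rfl; simp at hy
  have hyd : y ≠ d := by rintro rfl; simp at hy
  have hyv : y ≠ v := by rintro rfl; simp at hy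
  have ya : ¬ G.Adj a y := fun h => by have := na y h; grind
  have yc : ¬ G.Adj c y := fun h => by have := nc y h; grind
  have hsub : ∀ z ∈ B, z ∈ ({a, b, c, d, v, y} : Set V) := by
    intro z hz
    have := hBe z hz
    (clear hN hcub hB htf; (try clear lim); (try clear close); (try clear fin); grind)
  -- the generic closing argument
  have close : ∀ p q r, ({p, q, r} : Set V) = {b, d, v} → p ≠ q → G.Adj y p → G.Adj y q →
      (∀ w, w ∈ ({a, b, c, d, v, y} : Set V)) ∧ G.Adj y r := by
    intro p q r hpqr hpq hyp hyq
    have mem : ∀ z, (z = p ∨ z = q ∨ z = r) ↔ (z = b ∨ z = d ∨ z = v) := by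
      intro z
      have := congrArg (fun S : Set V => z ∈ S) hpqr
      simpa using this
    have ea : ∀ z, (z = p ∨ z = q ∨ z = r) → G.Adj z a ∧ G.Adj z c := by
      intro z hz
      rcases (mem z).1 hz with rfl | rfl | rfl
      exacts [⟨h1.symm, h2⟩, ⟨h4, h3.symm⟩, ⟨hva, hvc⟩]
    have hall : ∀ w, w ∈ ({a, b, c, d, v, y} : Set V) := by
      apply fill G hN B hB _ hsub r y
      · have := ea r (by simp)
        exact lim r a c hac this.1 this.2 _ (by simp) (by simp)
      · have m1 := mem p
        have m2 := mem q
        exact lim y p q hpq hyp hyq _ (by (clear hN hcub hB htf; (try clear lim); (try clear close); (try clear fin); grind)) (by (clear hN hcub hB htf; (try clear lim); (try clear close); (try clear fin); grind))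
      · intro z hz x hx hzx
        by_contra hcon
        push Not at hcon
        have hz2 : z = a ∨ z = c ∨ z = p ∨ z = q := by
          have := mem z
          (clear hN hcub hB htf; (try clear lim); (try clear close); (try clear fin); grind)
        rcases hz2 with rfl | rfl | rfl | rfl
        · have := na x hzx
          (clear hN hcub hB htf; (try clear lim); (try clear close); (try clear fin); grind)
        · have := nc x hzx
          (clear hN hcub hB htf; (try clear lim); (try clear close); (try clear fin); grind)
        · have e := ea z (by simp)
          have := hcub z a c y hac hya.symm hyc.symm e.1 e.2 hyp.symm x hzx
          (clear hN hcub hB htf; (try clear lim); (try clear close); (try clear fin); grind)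
        · have e := ea z (by simp)
          have := hcub z a c y hac hya.symm hyc.symm e.1 e.2 hyq.symm x hzx
          (clear hN hcub hB htf; (try clear lim); (try clear close); (try clear fin); grind)
    refine ⟨hall, ?_⟩
    obtain ⟨z, hz, hzp, hzq⟩ := hN y p q
    have i1 := hall z
    have i2 := hz.ne
    have i3 := mem z
    have i4 : z ≠ a := by rintro rfl; exact ya hz.symm
    have i5 : z ≠ c := by rintro rfl; exact yc hz.symm
    have : z = r := by (clear hN hcub hB htf; (try clear lim); (try clear close); (try clear fin); grind)
    exact this ▸ hz
  have fin : (∀ w, w ∈ ({a, b, c, d, v, y} : Set V)) → G.Adj y b → G.Adj y d → G.Adj y v →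
      Nonempty (G ≃g completeBipartiteGraph (Fin 3) (Fin 3)) := fun hall e1 e2 e3 =>
    k33 G hcub htf a c y b d v hall hac hya.symm hyc.symm hbd hvb.symm hvd.symm h1 h4.symm
      hva.symm h2.symm h3 hvc.symm e1 e2 e3
  have hs' : s = b ∨ s = d ∨ s = v := by
    have := hys.symm
    (clear hN hcub hB htf; (try clear lim); (try clear close); (try clear fin); grind)
  have ht' : t = b ∨ t = d ∨ t = v := by
    have := hyt.symm
    (clear hN hcub hB htf; (try clear lim); (try clear close); (try clear fin); grind)
  have hpair : (G.Adj y b ∧ G.Adj y d) ∨ (G.Adj y b ∧ G.Adj y v) ∨ (G.Adj y d ∧ G.Adj y v) := by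
    (clear hN hcub hB htf; (try clear lim); (try clear close); (try clear fin); grind)
  rcases hpair with ⟨e1, e2⟩ | ⟨e1, e2⟩ | ⟨e1, e2⟩
  · obtain ⟨hall, e⟩ := close b d v rfl hbd e1 e2
    exact fin hall e1 e2 e
  · obtain ⟨hall, e⟩ := close b v d (by rw [Set.pair_comm v d]) hvb.symm e1 e2
    exact fin hall e1 e e2
  · obtain ⟨hall, e⟩ := close d v b (by rw [Set.pair_comm v b, Set.insert_comm]) hvd.symm e1 e2
    exact fin hall e e1 e2

open SimpleGraph in
/-- A connected simple cubic graph in which any two cycles share a vertex is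
isomorphic to `K₄` or to `K_{3,3}`. -/
theorem cubic_all_cycles_meet {V : Type*} [Fintype V] (G : SimpleGraph V)
    (hconn : G.Connected) (hcubic : IsCubic G)
    (hmeet : ∀ (u w : V) (p : G.Walk u u) (q : G.Walk w w),
      p.IsCycle → q.IsCycle → ∃ z : V, z ∈ p.support ∧ z ∈ q.support) :
    Nonempty (G ≃g (⊤ : SimpleGraph (Fin 4))) ∨
    Nonempty (G ≃g completeBipartiteGraph (Fin 3) (Fin 3)) := by
  classical
  have hthree : ∀ v, ∃ x y z, x ≠ y ∧ x ≠ z ∧ y ≠ z ∧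
      ∀ w, G.Adj v w ↔ w = x ∨ w = y ∨ w = z := by
    intro v
    have h := hcubic v
    rw [Nat.card_coe_set_eq, Set.ncard_eq_three] at h
    obtain ⟨x, y, z, h1, h2, h3, h⟩ := h
    refine ⟨x, y, z, h1, h2, h3, fun w => ?_⟩
    rw [← mem_neighborSet, h]
    simp
  have hN : ∀ v x y, ∃ z, G.Adj v z ∧ z ≠ x ∧ z ≠ y := by
    intro v x y
    obtain ⟨p, q, r, h1, h2, h3, h⟩ := hthree v
    by_cases e1 : p ≠ x ∧ p ≠ y
    · exact ⟨p, (h p).2 (by simp), e1⟩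
    by_cases e2 : q ≠ x ∧ q ≠ y
    · exact ⟨q, (h q).2 (by simp), e2⟩
    exact ⟨r, (h r).2 (by simp), by grind⟩
  have hcub : ∀ v x y z, x ≠ y → x ≠ z → y ≠ z → G.Adj v x → G.Adj v y → G.Adj v z →
      ∀ w, G.Adj v w → w = x ∨ w = y ∨ w = z := by
    intro v x y z h1 h2 h3 a1 a2 a3 w a4
    obtain ⟨p, q, r, -, -, -, h⟩ := hthree v
    rw [h] at a1 a2 a3 a4
    grind
  obtain ⟨v₀⟩ := hconn.nonempty
  have hnac : ¬ G.IsAcyclic := by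
    intro hac
    haveI : Nonempty V := ⟨v₀⟩
    obtain ⟨u, hu⟩ := acyclic_leaf G hac
    obtain ⟨x, hx, -, -⟩ := hN u u u
    obtain ⟨y, hy, hyx, -⟩ := hN u x x
    exact hyx (hu y x hy hx)
  obtain ⟨u, C, hC, hg⟩ := exists_girth_eq_length.2 hnac
  have hmin : ∀ {w : V} (q : G.Walk w w), q.IsCycle → C.length ≤ q.length := by
    intro w q hq
    rw [← hg]
    exact girth_le_length hq
  have h3 : 3 ≤ C.length := hC.three_le_length
  have hB := exists_two G hN hcub hmeet C hC
  -- the complement of `C` is nonempty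
  have hne : ∃ v, v ∉ {z | z ∈ C.support} := by
    obtain ⟨x, hx, hx1, hx2⟩ := hN u (C.getVert 1) (C.getVert (C.length - 1))
    refine ⟨x, fun hmem => ?_⟩
    obtain ⟨i, rfl, hi⟩ := Walk.mem_support_iff_exists_getVert.1 hmem
    have i0 : i ≠ 0 := by rintro rfl; simp at hx
    have i1 : i ≠ 1 := by rintro rfl; simp at hx1
    have i2 : i ≠ C.length := by rintro rfl; simp at hx
    have i3 : i ≠ C.length - 1 := by rintro rfl; simp at hx2
    have hl : (C.take i).length = i := by rw [Walk.take_length]; omega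
    have := hmin _ (close_path (C.take i) (hC.isPath_take (by omega)) hx.symm (by omega))
    rw [Walk.length_cons] at this
    omega
  obtain ⟨v, hv, x, hx, y, hy, hxy, hvx, hvy⟩ := hB {z | z ∈ C.support} (fun z hz => hz) hne
  have h4 : C.length ≤ 4 := by
    let D := C.rotate x hx
    have hD : D.IsCycle := hC.rotate hx
    have hDl : D.length = C.length := by simp [D]
    have hDs : ∀ z, z ∈ D.support ↔ z ∈ C.support := by
      intro z; simp [D]
    obtain ⟨i, hi, hil⟩ := Walk.mem_support_iff_exists_getVert.1 ((hDs y).2 hy)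
    subst hi
    have i0 : i ≠ 0 := by rintro rfl; simp at hxy
    have i2 : i ≠ D.length := by rintro rfl; simp at hxy
    have hl1 : (D.take i).length = i := by rw [Walk.take_length]; omega
    have hl2 : (D.drop i).length = D.length - i := by rw [Walk.drop_length]
    have p1 : (Walk.cons hvx (D.take i)).IsPath := by
      rw [Walk.cons_isPath_iff]
      refine ⟨hD.isPath_take (by omega), fun h => hv ((hDs v).1 ?_)⟩
      exact (D.isSubwalk_take i).support_subset h
    have p2 : (Walk.cons hvy (D.drop i)).IsPath := by
      rw [Walk.cons_isPath_iff]
      refine ⟨hD.isPath_drop (by omega), fun h => hv ((hDs v).1 ?_)⟩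
      exact (D.isSubwalk_drop i).support_subset h
    have c1 := hmin _ (close_path _ p1 hvy.symm (by rw [Walk.length_cons]; omega))
    have c2 := hmin _ (close_path _ p2 hvx.symm (by rw [Walk.length_cons]; omega))
    simp only [Walk.length_cons] at c1 c2
    omega
  have hinj := hC.getVert_injOn'
  have adj : ∀ i, i < C.length → G.Adj (C.getVert i) (C.getVert (i + 1)) :=
    fun i hi => C.adj_getVert_succ hi
  have hlast : C.getVert C.length = C.getVert 0 := by simp
  have hlen : C.length = 3 ∨ C.length = 4 := by omega
  have hvi : ∀ i, v ≠ C.getVert i := by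
    rintro i rfl
    exact hv (C.getVert_mem_support i)
  rcases hlen with hlen | hlen
  · left
    have supp : ∀ z ∈ {z | z ∈ C.support},
        z = C.getVert 0 ∨ z = C.getVert 1 ∨ z = C.getVert 2 := by
      intro z hz
      obtain ⟨i, rfl, hi⟩ := Walk.mem_support_iff_exists_getVert.1 hz
      rw [hlen] at hi hlast
      interval_cases i
      · simp
      · simp
      · simp
      · left; exact hlast
    have e1 := adj 0 (by omega)
    have e2 := adj 1 (by omega)
    have e3 := adj 2 (by omega)
    rw [hlen] at hlast
    simp only [Nat.reduceAdd, zero_add] at e1 e2 e3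
    rw [hlast] at e3
    have v0 := hvi 0
    have v1 := hvi 1
    have v2 := hvi 2
    have sx := supp x hx
    have sy := supp y hy
    generalize C.getVert 0 = a at *
    generalize C.getVert 1 = b at *
    generalize C.getVert 2 = c at *
    have hp : (G.Adj v a ∧ G.Adj v b) ∨ (G.Adj v b ∧ G.Adj v c) ∨ (G.Adj v c ∧ G.Adj v a) := by
      grind
    rcases hp with ⟨f1, f2⟩ | ⟨f1, f2⟩ | ⟨f1, f2⟩
    · exact case3 G hN hcub _ hB a b c v supp v2 e1 e3.symm e2 f1 f2
    · exact case3 G hN hcub _ hB b c a v (fun z hz => by have := supp z hz; tauto) v0 e2 e1.symm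
        e3 f1 f2
    · exact case3 G hN hcub _ hB c a b v (fun z hz => by have := supp z hz; tauto) v1 e3 e2.symm
        e1 f1 f2
  · right
    have htf : ∀ x y z, G.Adj x y → G.Adj y z → ¬ G.Adj x z := by
      intro x y z h1 h2 h3
      have hp : (Walk.cons h1 (Walk.cons h2 Walk.nil)).IsPath := by
        simp [Walk.cons_isPath_iff, h1.ne, h2.ne, h3.ne]
      have := hmin _ (close_path _ hp h3.symm (by simp))
      simp at this
      omega
    have supp : ∀ z ∈ {z | z ∈ C.support},
        z = C.getVert 0 ∨ z = C.getVert 1 ∨ z = C.getVert 2 ∨ z = C.getVert 3 := by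
      intro z hz
      obtain ⟨i, rfl, hi⟩ := Walk.mem_support_iff_exists_getVert.1 hz
      rw [hlen] at hi hlast
      interval_cases i
      · simp
      · simp
      · simp
      · simp
      · left; exact hlast
    have d1 : C.getVert 0 ≠ C.getVert 2 := fun h => by
      have := hinj (by simp) (by simp; omega) h
      omega
    have d2 : C.getVert 1 ≠ C.getVert 3 := fun h => by
      have := hinj (by simp; omega) (by simp; omega) h
      omega
    have e1 := adj 0 (by omega)
    have e2 := adj 1 (by omega)
    have e3 := adj 2 (by omega)
    have e4 := adj 3 (by omega)
    rw [hlen] at hlast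
    simp only [Nat.reduceAdd, zero_add] at e1 e2 e3 e4
    rw [hlast] at e4
    have v0 := hvi 0
    have v1 := hvi 1
    have v2 := hvi 2
    have v3 := hvi 3
    have sx := supp x hx
    have sy := supp y hy
    have hvt := fun z w => htf v z w
    generalize C.getVert 0 = a at *
    generalize C.getVert 1 = b at *
    generalize C.getVert 2 = c at *
    generalize C.getVert 3 = d at *
    have q1 := fun h => htf v a b h e1
    have q2 := fun h => htf v b c h e2
    have q3 := fun h => htf v c d h e3
    have q4 := fun h => htf v d a h e4
    have hp : (G.Adj v a ∧ G.Adj v c) ∨ (G.Adj v b ∧ G.Adj v d) := by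
      clear hB hcub hN hmeet hmin htf hvt supp adj hinj hvi
      grind
    rcases hp with ⟨f1, f2⟩ | ⟨f1, f2⟩
    · exact case4 G hN hcub htf _ hB a b c d v supp d1 d2 v1 v3 e1 e2 e3 e4 f1 f2
    · exact case4 G hN hcub htf _ hB b c d a v (fun z hz => by
        rcases supp z hz with h | h | h | h <;> simp [h])
        d2 d1.symm v2 v0 e2 e3 e4 e1 f1 f2
end
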